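/- Let A be an alphabet with at least two letters. Every finite joinless code Q ⊆ nA* has a finite complementary joinless code Q', i.e. a finite joinless code Q' ⊆ nA* such that Q ∪ Q' is a maximal joinless code and Q·nA* ∩ Q'·nA* = ∅; moreover Q' can be chosen with maxlen(Q') ≤ max(maxlen(Q), 0) whenever Q is nonempty, i.e. with maxlen(Q') = maxlen(Q) when Q is nonempty and not already maximal. -/

import Mathlib

open Stream'

variable {A : Type*} {n : ℕ}

/-- The initial-factor order `u ≤_init v` on `n`-tuples of strings:
`u i` is a prefix of `v i` for every coordinate `i`. -/
def initLE (u v : Fin n → List A) : Prop := ∀ i, u i <+: v i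

/-- `w` is the join (least upper bound w.r.t. `initLE`) of `u` and `v`. -/
def IsJoin (u v w : Fin n → List A) : Prop :=
  initLE u w ∧ initLE v w ∧ ∀ z, initLE u z → initLE v z → initLE w z

/-- The join of `u` and `v` exists. -/
def JoinEx (u v : Fin n → List A) : Prop := ∃ w, IsJoin u v w

/-- The set join `X ∨ Y = {x ∨ y : x ∈ X, y ∈ Y, x ∨ y exists}`. -/
def setJoin (X Y : Set (Fin n → List A)) : Set (Fin n → List A) :=
  {w | ∃ x ∈ X, ∃ y ∈ Y, IsJoin x y w}

/-- A joinless code: no two distinct elements have a join. -/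
def Joinless (S : Set (Fin n → List A)) : Prop :=
  ∀ x ∈ S, ∀ y ∈ S, x ≠ y → ¬ JoinEx x y

/-- A maximal joinless code. -/
def MaxJoinless (S : Set (Fin n → List A)) : Prop :=
  Joinless S ∧ ∀ T : Set (Fin n → List A), Joinless T → S ⊆ T → S = T

/-- Coordinatewise concatenation in `nA*`. -/
def cat (x v : Fin n → List A) : Fin n → List A := fun i => x i ++ v i

/-- The right ideal `S·nA*` generated by `S`. -/
def rIdeal (S : Set (Fin n → List A)) : Set (Fin n → List A) :=
  {w | ∃ s ∈ S, ∃ v, w = cat s v}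

/-- Coordinatewise concatenation of a tuple of finite strings
with a tuple of right-infinite words. -/
def catOmega (x : Fin n → List A) (w : Fin n → Stream' A) : Fin n → Stream' A :=
  fun i => x i ++ₛ w i

/-- `S·nA^ω`. -/
def omegaIdeal (S : Set (Fin n → List A)) : Set (Fin n → Stream' A) :=
  {w | ∃ s ∈ S, ∃ u, w = catOmega s u}

/-- `P ≡_fin Q`: the symmetric difference of the generated right ideals is finite. -/
def equivFin (P Q : Set (Fin n → List A)) : Prop :=
  (symmDiff (rIdeal P) (rIdeal Q)).Finite

/-- `maxlen(S)`: the maximum coordinate length over a (finite nonempty) set. -/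
noncomputable def maxlen (S : Set (Fin n → List A)) : ℕ :=
  sSup {m | ∃ x ∈ S, ∃ i, (x i).length = m}

/-!
Let `L` bound the coordinate lengths of `Q`, and let `Q'` consist of the tuples whose coordinates
all have length `L` and which have no initial factor in `Q`. Among strings with a common extension,
the prefix order is comparison of lengths; hence two tuples have a join as soon as they have a
common upper bound, tuples with all coordinates of length `L` form a joinless code, and an element
of `Q` below an extension of `w ∈ Q'` would already be below `w`. For maximality, lengthen an
arbitrary tuple `t` and cut it to length `L`: the result is in `Q'` or has an initial factor in `Q`,
and in both cases some element of `Q ∪ Q'` has a join with `t`.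
-/

theorem initLE.trans {u v w : Fin n → List A} (huv : initLE u v) (hvw : initLE v w) :
    initLE u w :=
  fun i => (huv i).trans (hvw i)

theorem initLE_of_length_le {u v z : Fin n → List A} (hu : initLE u z) (hv : initLE v z)
    (hlen : ∀ i, (u i).length ≤ (v i).length) : initLE u v :=
  fun i => List.prefix_of_prefix_length_le (hu i) (hv i) (hlen i)

theorem joinEx_iff_exists_upperBound {u v : Fin n → List A} :
    JoinEx u v ↔ ∃ z, initLE u z ∧ initLE v z := by
  refine ⟨fun ⟨w, hu, hv, _⟩ => ⟨w, hu, hv⟩, fun ⟨z, hu, hv⟩ => ?_⟩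
  have coordinate_join (i : Fin n) :
      ∃ w, u i <+: w ∧ v i <+: w ∧ ∀ y, u i <+: y → v i <+: y → w <+: y := by
    rcases List.prefix_or_prefix_of_prefix (hu i) (hv i) with huv | hvu
    · exact ⟨v i, huv, List.prefix_rfl, fun _ _ hy => hy⟩
    · exact ⟨u i, List.prefix_rfl, hvu, fun _ hy _ => hy⟩
  choose w huw hvw hleast using coordinate_join
  exact ⟨w, huw, hvw, fun y hy hy' i => hleast i (y i) (hy i) (hy' i)⟩

theorem mem_rIdeal_iff {S : Set (Fin n → List A)} {w : Fin n → List A} :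
    w ∈ rIdeal S ↔ ∃ s ∈ S, initLE s w := by
  constructor
  · rintro ⟨s, hs, v, rfl⟩
    exact ⟨s, hs, fun i => List.prefix_append _ _⟩
  · rintro ⟨s, hs, hsw⟩
    choose v hv using hsw
    exact ⟨s, hs, v, funext fun i => (hv i).symm⟩

theorem Joinless.mono {S T : Set (Fin n → List A)} (hT : Joinless T) (hST : S ⊆ T) :
    Joinless S :=
  fun x hx y hy => hT x (hST hx) y (hST hy)

theorem not_joinEx_of_rIdeal_inter_eq_empty {S T : Set (Fin n → List A)}
    (hST : rIdeal S ∩ rIdeal T = ∅) {s t : Fin n → List A} (hs : s ∈ S) (ht : t ∈ T) :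
    ¬ JoinEx s t := by
  rintro ⟨z, hsz, htz, _⟩
  exact Set.eq_empty_iff_forall_notMem.mp hST z
    ⟨mem_rIdeal_iff.mpr ⟨s, hs, hsz⟩, mem_rIdeal_iff.mpr ⟨t, ht, htz⟩⟩

theorem Joinless.union {S T : Set (Fin n → List A)} (hS : Joinless S) (hT : Joinless T)
    (hST : rIdeal S ∩ rIdeal T = ∅) : Joinless (S ∪ T) := by
  rintro x (hx | hx) y (hy | hy) hxy
  · exact hS x hx y hy hxy
  · exact not_joinEx_of_rIdeal_inter_eq_empty hST hx hy
  · exact not_joinEx_of_rIdeal_inter_eq_empty (Set.inter_comm _ _ ▸ hST) hx hy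
  · exact hT x hx y hy hxy

theorem Joinless.maxJoinless_of_forall_exists_joinEx {S : Set (Fin n → List A)}
    (hS : Joinless S) (hjoin : ∀ t, ∃ s ∈ S, JoinEx s t) : MaxJoinless S := by
  refine ⟨hS, fun T hT hST => hST.antisymm fun t ht => ?_⟩
  obtain ⟨s, hs, hst⟩ := hjoin t
  have s_eq_t : s = t := by
    by_contra hne
    exact hT s (hST hs) t ht hne hst
  exact s_eq_t ▸ hs

theorem exists_joinEx_of_mem_rIdeal {S : Set (Fin n → List A)} {w t : Fin n → List A}
    (hw : w ∈ rIdeal S) (hwt : JoinEx w t) : ∃ s ∈ S, JoinEx s t := by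
  obtain ⟨s, hs, hsw⟩ := mem_rIdeal_iff.mp hw
  obtain ⟨z, hwz, htz⟩ := joinEx_iff_exists_upperBound.mp hwt
  exact ⟨s, hs, joinEx_iff_exists_upperBound.mpr ⟨z, hsw.trans hwz, htz⟩⟩

/-- The uniform code of length `L`: all tuples of strings whose coordinates have length `L`. -/
def uniformCode (L : ℕ) : Set (Fin n → List A) := {w | ∀ i, (w i).length = L}

theorem finite_uniformCode [Finite A] (L : ℕ) :
    (uniformCode L : Set (Fin n → List A)).Finite :=
  Set.Finite.pi' fun _ => List.finite_length_eq A L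

theorem joinless_uniformCode (L : ℕ) : Joinless (uniformCode L : Set (Fin n → List A)) := by
  rintro x hx y hy hxy ⟨z, hxz, hyz, _⟩
  have hlen (i : Fin n) : (x i).length = (y i).length := (hx i).trans (hy i).symm
  have hle : initLE x y := initLE_of_length_le hxz hyz fun i => (hlen i).le
  exact hxy (funext fun i => (hle i).eq_of_length (hlen i))

theorem exists_mem_uniformCode_joinEx [Nonempty A] (L : ℕ) (t : Fin n → List A) :
    ∃ w ∈ uniformCode L, JoinEx w t := by
  obtain ⟨a⟩ := ‹Nonempty A›
  let z : Fin n → List A := fun i => t i ++ List.replicate L a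
  refine ⟨fun i => (z i).take L, fun i => by simp [z], ?_⟩
  exact joinEx_iff_exists_upperBound.mpr
    ⟨z, fun i => List.take_prefix _ _, fun i => List.prefix_append _ _⟩

/-- The uniform complement of `Q` at length `L`: the tuples in the uniform code of length `L` that
have no initial factor in `Q`. It is a complementary code of `Q` once `L` bounds the coordinate
lengths of `Q`. -/
def uniformComplement (Q : Set (Fin n → List A)) (L : ℕ) : Set (Fin n → List A) :=
  uniformCode L \ rIdeal Q

theorem joinless_uniformComplement (Q : Set (Fin n → List A)) (L : ℕ) :
    Joinless (uniformComplement Q L) :=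
  (joinless_uniformCode L).mono Set.sdiff_subset

theorem rIdeal_inter_rIdeal_uniformComplement {Q : Set (Fin n → List A)} {L : ℕ}
    (hL : ∀ q ∈ Q, ∀ i, (q i).length ≤ L) :
    rIdeal Q ∩ rIdeal (uniformComplement Q L) = ∅ := by
  refine Set.eq_empty_iff_forall_notMem.mpr fun z ⟨hzQ, hzQ'⟩ => ?_
  obtain ⟨q, hq, hqz⟩ := mem_rIdeal_iff.mp hzQ
  obtain ⟨w, ⟨hwL, hwQ⟩, hwz⟩ := mem_rIdeal_iff.mp hzQ'
  have hqw : initLE q w :=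
    initLE_of_length_le hqz hwz fun i => (hL q hq i).trans_eq (hwL i).symm
  exact hwQ (mem_rIdeal_iff.mpr ⟨q, hq, hqw⟩)

theorem exists_mem_union_uniformComplement_joinEx [Nonempty A] (Q : Set (Fin n → List A))
    (L : ℕ) (t : Fin n → List A) : ∃ s ∈ Q ∪ uniformComplement Q L, JoinEx s t := by
  obtain ⟨w, hwL, hwt⟩ := exists_mem_uniformCode_joinEx L t
  by_cases hwQ : w ∈ rIdeal Q
  · obtain ⟨s, hs, hst⟩ := exists_joinEx_of_mem_rIdeal hwQ hwt
    exact ⟨s, Or.inl hs, hst⟩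
  · exact ⟨w, Or.inr ⟨hwL, hwQ⟩, hwt⟩

theorem Joinless.maxJoinless_union_uniformComplement [Nonempty A] {Q : Set (Fin n → List A)}
    {L : ℕ} (hQ : Joinless Q) (hL : ∀ q ∈ Q, ∀ i, (q i).length ≤ L) :
    MaxJoinless (Q ∪ uniformComplement Q L) :=
  (hQ.union (joinless_uniformComplement Q L)
    (rIdeal_inter_rIdeal_uniformComplement hL)).maxJoinless_of_forall_exists_joinEx
      (exists_mem_union_uniformComplement_joinEx Q L)

theorem length_le_maxlen {S : Set (Fin n → List A)} (hS : S.Finite) {x : Fin n → List A}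
    (hx : x ∈ S) (i : Fin n) : (x i).length ≤ maxlen S := by
  have lengths_eq_iUnion : {m | ∃ x ∈ S, ∃ i, (x i).length = m} =
      ⋃ x ∈ S, Set.range fun i => (x i).length := by
    ext m
    simp only [Set.mem_ofPred_eq, Set.mem_iUnion, Set.mem_range, exists_prop]
  have lengths_bddAbove : BddAbove {m | ∃ x ∈ S, ∃ i, (x i).length = m} :=
    lengths_eq_iUnion ▸ (hS.biUnion fun _ _ => Set.finite_range _).bddAbove
  exact le_csSup lengths_bddAbove ⟨x, hx, i, rfl⟩

theorem maxlen_le {S : Set (Fin n → List A)} {L : ℕ}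
    (hL : ∀ x ∈ S, ∀ i, (x i).length ≤ L) : maxlen S ≤ L := by
  refine csSup_le' ?_
  rintro _ ⟨x, hx, i, rfl⟩
  exact hL x hx i

theorem maxlen_eq_of_subset_uniformCode (hn : 0 < n) {S : Set (Fin n → List A)} {L : ℕ}
    (hS : S ⊆ uniformCode L) (hne : S.Nonempty) : maxlen S = L := by
  obtain ⟨x, hx⟩ := hne
  refine IsGreatest.csSup_eq ⟨⟨x, hx, ⟨0, hn⟩, hS hx _⟩, ?_⟩
  rintro _ ⟨y, hy, i, rfl⟩
  exact (hS hy i).le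

/-- Existence of a finite complementary joinless code (for `|A| ≥ 2`). -/
theorem stmt_10 [Fintype A] (hA : 2 ≤ Fintype.card A) (hn : 1 ≤ n)
    (Q : Set (Fin n → List A)) (hQf : Q.Finite) (hQ : Joinless Q) :
    ∃ Q' : Set (Fin n → List A),
      Q'.Finite ∧ Joinless Q' ∧ MaxJoinless (Q ∪ Q') ∧
      rIdeal Q ∩ rIdeal Q' = ∅ ∧
      (Q.Nonempty → maxlen Q' ≤ maxlen Q) ∧
      (Q.Nonempty → ¬ MaxJoinless Q → maxlen Q' = maxlen Q) := by
  have : Nonempty A := Fintype.card_pos_iff.mp (by lia)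
  have hL : ∀ q ∈ Q, ∀ i, (q i).length ≤ maxlen Q := fun q hq => length_le_maxlen hQf hq
  have hsub : uniformComplement Q (maxlen Q) ⊆ uniformCode (maxlen Q) := Set.sdiff_subset
  have hmax : MaxJoinless (Q ∪ uniformComplement Q (maxlen Q)) :=
    hQ.maxJoinless_union_uniformComplement hL
  refine ⟨uniformComplement Q (maxlen Q), (finite_uniformCode _).subset hsub,
    joinless_uniformComplement Q _, hmax, rIdeal_inter_rIdeal_uniformComplement hL,
    fun _ => maxlen_le fun w hw i => (hsub hw i).le, fun _ hQmax => ?_⟩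
  have hne : (uniformComplement Q (maxlen Q)).Nonempty := by
    by_contra hempty
    rw [Set.not_nonempty_iff_eq_empty.mp hempty, Set.union_empty] at hmax
    exact hQmax hmax
  exact maxlen_eq_of_subset_uniformCode hn hsub hne
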